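/- For every fixed ε > 0 there is a constant C(ε) such that, with the notation of the context, N₀(B) ≤ C(ε) · (Y₁Y₂Y₃ + (X₁X₂X₃)^{1/3}) · B^ε; consequently N₀(B) ≤ C(ε) · (Y₁Y₂Y₃ + B^{1/2}) · B^ε. The constant is uniform in a₁, a₂, a₃ and in the parameters X_i, Y_i. -/

import Mathlib

/-- The set `S₀(B)` of sextuples `(x₁, x₂, x₃, y₁, y₂, y₃)` of positive integers (encoded as a
pair of functions `Fin 3 → ℤ`) such that `Xᵢ/2 < xᵢ ≤ Xᵢ` and `Yᵢ/2 < yᵢ ≤ Yᵢ`, the equation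
`a₁x₁²y₁³ + a₂x₂²y₂³ + a₃x₃²y₃³ = 0` holds, `gcd(x₁y₁, x₂y₂, x₃y₃) = 1`,
`gcd(a₁a₂a₃, x₁x₂x₃y₁y₂y₃) = 1`, and `a₁y₁, a₂y₂, a₃y₃` are all squarefree. -/
def S0 (a : Fin 3 → ℤ) (X Y : Fin 3 → ℝ) : Set ((Fin 3 → ℤ) × (Fin 3 → ℤ)) :=
  {p | (∀ i, 0 < p.1 i) ∧ (∀ i, 0 < p.2 i) ∧
    (∀ i, X i / 2 < (p.1 i : ℝ) ∧ (p.1 i : ℝ) ≤ X i) ∧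
    (∀ i, Y i / 2 < (p.2 i : ℝ) ∧ (p.2 i : ℝ) ≤ Y i) ∧
    a 0 * p.1 0 ^ 2 * p.2 0 ^ 3 + a 1 * p.1 1 ^ 2 * p.2 1 ^ 3 +
      a 2 * p.1 2 ^ 2 * p.2 2 ^ 3 = 0 ∧
    Int.gcd (p.1 0 * p.2 0) (Int.gcd (p.1 1 * p.2 1) (p.1 2 * p.2 2)) = 1 ∧
    Int.gcd (a 0 * a 1 * a 2) (p.1 0 * p.1 1 * p.1 2 * p.2 0 * p.2 1 * p.2 2) = 1 ∧
    (∀ i, Squarefree (a i * p.2 i))}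

/-!
Fix `y` and put `cᵢ = aᵢyᵢ³`, so that `x` lies on the conic `∑ cᵢxᵢ² = 0`; let
`⟨x, x'⟩ = ∑ cᵢxᵢx'ᵢ`. Modulo a prime power dividing some `cᵢ` the conic degenerates into two lines,
so the points fall into at most `∏ τ(cᵢ)` classes such that `∏ cᵢ ∣ 2⟨x, x'⟩` for `x, x'` in the
same class. On the other hand `⟨x, x'⟩` is, up to a bounded factor, the value of the form at
a difference of affine coordinates, hence it is `O(δ² minᵢ |cᵢ|Xᵢ²)` if `x, x'` lie on a common arc
of length `δ` of the rescaled conic. Two points of one class on a short enough arc are thus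
orthogonal, and two orthogonal isotropic vectors of a nondegenerate ternary form are proportional,
so the points coincide. This leaves `O(1 + (∏ Xᵢ / ∏ |cᵢ|)^(1/3))` points per class. Since
`∏ |cᵢ| ≥ (∏ Yᵢ / 8)³`, summing over the at most `∏ Yᵢ` triples `y` and using `τ(n) ≪ n^ε` gives the
bound.
-/

theorem natCast_add_one_le_max_mul_pow {L q : ℝ} (hL : 0 < L) (hq : 1 + L ≤ q) (v : ℕ) :
    (v + 1 : ℝ) ≤ max 1 (1 / L) * q ^ v := by
  have hKL : 1 ≤ max 1 (1 / L) * L := (div_le_iff₀ hL).mp (le_max_right _ _)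
  calc (v + 1 : ℝ) ≤ max 1 (1 / L) * (1 + v * L) := by
        nlinarith [le_max_left 1 (1 / L), (Nat.cast_nonneg v : (0 : ℝ) ≤ v)]
    _ ≤ max 1 (1 / L) * (1 + L) ^ v := by
        gcongr
        exact one_add_mul_le_pow (by linarith) v
    _ ≤ max 1 (1 / L) * q ^ v := by gcongr

theorem natCast_add_one_le_pow {q : ℝ} (hq : 2 ≤ q) (v : ℕ) : (v + 1 : ℝ) ≤ q ^ v :=
  calc (v + 1 : ℝ) ≤ 2 ^ v := by exact_mod_cast Nat.lt_two_pow_self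
    _ ≤ q ^ v := by gcongr

theorem natCast_rpow_eq_prod_primeFactors {n : ℕ} (hn : n ≠ 0) (ε : ℝ) :
    (n : ℝ) ^ ε = ∏ p ∈ n.primeFactors, ((p : ℝ) ^ ε) ^ n.factorization p := by
  conv_lhs => rw [← Nat.prod_factorization_pow_eq_self hn, Finsupp.prod, Nat.cast_prod,
    ← Real.finsetProd_rpow _ _ fun _ _ ↦ by positivity]
  refine Finset.prod_congr rfl fun p _ ↦ ?_
  rw [Nat.cast_pow, Real.rpow_pow_comm p.cast_nonneg]

theorem exists_card_divisors_le_mul_rpow {ε : ℝ} (hε : 0 < ε) :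
    ∃ C : ℝ, 0 < C ∧ ∀ n : ℕ, n ≠ 0 → (n.divisors.card : ℝ) ≤ C * (n : ℝ) ^ ε := by
  set L : ℝ := 2 ^ ε - 1
  have hL : 0 < L := sub_pos.mpr (Real.one_lt_rpow one_lt_two hε)
  set K : ℝ := max 1 (1 / L)
  have hK : 1 ≤ K := le_max_left _ _
  obtain ⟨P, hP⟩ := exists_nat_ge ((2 : ℝ) ^ ε⁻¹)
  refine ⟨K ^ P, by positivity, fun n hn ↦ ?_⟩
  have factor_le (p : ℕ) (hp : p ∈ n.primeFactors) : (n.factorization p + 1 : ℝ) ≤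
      (if p < P then K else 1) * ((p : ℝ) ^ ε) ^ n.factorization p := by
    have hp2 : (2 : ℝ) ≤ p := by exact_mod_cast (Nat.prime_of_mem_primeFactors hp).two_le
    split_ifs with hpP
    · refine natCast_add_one_le_max_mul_pow hL ?_ _
      rw [add_sub_cancel]
      gcongr
    · rw [one_mul]
      refine natCast_add_one_le_pow ?_ _
      have hPp : (P : ℝ) ≤ p := by exact_mod_cast not_lt.mp hpP
      exact (Real.rpow_inv_le_iff_of_pos zero_le_two p.cast_nonneg hε).mp (hP.trans hPp)
  have small_primes : (n.primeFactors.filter (· < P)).card ≤ P := by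
    simpa using Finset.card_le_card (t := Finset.range P) fun p hp ↦
      Finset.mem_range.mpr (Finset.mem_filter.mp hp).2
  calc (n.divisors.card : ℝ) = ∏ p ∈ n.primeFactors, (n.factorization p + 1 : ℝ) := by
        rw [Nat.card_divisors hn]
        push_cast
        rfl
    _ ≤ ∏ p ∈ n.primeFactors,
        (if p < P then K else 1) * ((p : ℝ) ^ ε) ^ n.factorization p :=
      Finset.prod_le_prod (fun _ _ ↦ by positivity) factor_le
    _ = K ^ (n.primeFactors.filter (· < P)).card * (n : ℝ) ^ ε := by
      rw [Finset.prod_mul_distrib, ← natCast_rpow_eq_prod_primeFactors hn, ← Finset.prod_filter,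
        Finset.prod_const]
    _ ≤ K ^ P * (n : ℝ) ^ ε := by gcongr

theorem sq_le_of_sq_mul_pow_le_div {A x y b : ℝ} (hA : 1 ≤ A) (hy : 1 ≤ y)
    (h : x ^ 2 * y ^ 3 ≤ b / A) : x ^ 2 ≤ b :=
  calc x ^ 2 ≤ x ^ 2 * y ^ 3 := le_mul_of_one_le_right (sq_nonneg _) (one_le_pow₀ hy)
    _ ≤ x ^ 2 * y ^ 3 * A := le_mul_of_one_le_right (by positivity) hA
    _ ≤ b := (le_div_iff₀ (one_pos.trans_le hA)).mp h

theorem le_six_mul_rpow_half {x B : ℝ} (hB : 0 ≤ B) (h : x ^ 2 ≤ 32 * B) :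
    x ≤ 6 * B ^ (1 / 2 : ℝ) := by
  rw [← Real.sqrt_eq_rpow]
  refine le_of_sq_le_sq ?_ (by positivity)
  rw [mul_pow, Real.sq_sqrt hB]
  linarith

theorem prod_fin_three_rpow_third_le {f : Fin 3 → ℝ} {m : ℝ} (hf : ∀ i, 0 ≤ f i)
    (hfm : ∀ i, f i ≤ m) : (∏ i, f i) ^ (1 / 3 : ℝ) ≤ m := by
  have hm : 0 ≤ m := (hf 0).trans (hfm 0)
  have hprod : ∏ i, f i ≤ m ^ 3 := by
    simpa using Finset.prod_le_prod (fun i _ ↦ hf i) fun i (_ : i ∈ Finset.univ) ↦ hfm i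
  rw [one_div, Real.rpow_inv_le_iff_of_pos (Finset.prod_nonneg fun i _ ↦ hf i) hm three_pos]
  exact_mod_cast hprod

theorem card_piFinset_Icc_floor_le {ι : Type*} [Fintype ι] [DecidableEq ι] {Y : ι → ℝ}
    (hY : ∀ i, 0 ≤ Y i) :
    ((Fintype.piFinset fun i ↦ Finset.Icc 1 ⌊Y i⌋).card : ℝ) ≤ ∏ i, Y i := by
  rw [Fintype.card_piFinset, Nat.cast_prod]
  refine Finset.prod_le_prod (fun _ _ ↦ by positivity) fun i _ ↦ ?_
  rw [Int.card_Icc, add_sub_cancel_right, Int.floor_toNat]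
  exact Nat.floor_le (hY i)

theorem sum_fin_three_rotate {R : Type*} [AddCommMonoid R] (f : Fin 3 → R) (i : Fin 3) :
    ∑ j, f j = f i + f (i + 1) + f (i + 2) := by
  fin_cases i <;> simp only [Fin.sum_univ_three] <;> simp <;> abel

theorem dvd_of_sum_eq_zero {R ι : Type*} [CommRing R] [Fintype ι] {f : ι → R}
    {q : R} (hf : ∑ i, f i = 0) (i : ι) (h : ∀ j ≠ i, q ∣ f j) : q ∣ f i := by
  classical
  rw [← Finset.add_sum_erase _ _ (Finset.mem_univ i)] at hf
  exact (dvd_add_left (Finset.dvd_sum fun j hj ↦ h j (Finset.ne_of_mem_erase hj))).mp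
    (hf ▸ dvd_zero q)

theorem dvd_of_sum_eq_zero_of_dvd_of_dvd {R : Type*} [CommRing R] {f : Fin 3 → R} {q : R}
    (hf : ∑ i, f i = 0) {i j : Fin 3} (hij : i ≠ j) (hi : q ∣ f i) (hj : q ∣ f j) (k : Fin 3) :
    q ∣ f k := by
  by_cases hk : k = i ∨ k = j
  · obtain rfl | rfl := hk <;> assumption
  · refine dvd_of_sum_eq_zero hf k fun l hl ↦ ?_
    obtain rfl | rfl : l = i ∨ l = j := by omega
    exacts [hi, hj]

theorem pairwise_isCoprime_terms {a x y : Fin 3 → ℤ} (hne : ∀ i, a i * y i ^ 3 * x i ^ 2 ≠ 0)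
    (hsum : ∑ i, a i * y i ^ 3 * x i ^ 2 = 0) (ha : IsCoprime (a 0) (a 1))
    (haxy : ∀ i j, IsCoprime (a i) (x j * y j))
    (hxy : ∀ q, Prime q → ∃ i, ¬ q ∣ x i * y i) :
    Pairwise fun i j ↦ IsCoprime (a i * y i ^ 3 * x i ^ 2) (a j * y j ^ 3 * x j ^ 2) := by
  intro i j hij
  refine isCoprime_of_prime_dvd (fun h ↦ hne i h.1) fun q hq hi hj ↦ ?_
  have dvd_or_dvd (k : Fin 3) : q ∣ a k ∨ q ∣ x k * y k := by
    obtain (hqa | hqy) | hqx := (hq.dvd_or_dvd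
      (dvd_of_sum_eq_zero_of_dvd_of_dvd hsum hij hi hj k)).imp_left hq.dvd_or_dvd
    · exact .inl hqa
    · exact .inr ((hq.dvd_of_dvd_pow hqy).mul_left _)
    · exact .inr ((hq.dvd_of_dvd_pow hqx).mul_right _)
  obtain ⟨k, hk⟩ := hxy q hq
  have dvd_a (l : Fin 3) : q ∣ a l :=
    (dvd_or_dvd l).resolve_right fun hl ↦
      hq.not_isUnit ((haxy k l).isUnit_of_dvd' ((dvd_or_dvd k).resolve_right hk) hl)
  exact hq.not_isUnit (ha.isUnit_of_dvd' (dvd_a 0) (dvd_a 1))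

theorem dvd_two_mul_pairing_of_gcd_eq {R : Type*} [CommRing R] [GCDMonoid R]
    {m g h b₁ b₂ x₁ x₂ y₁ y₂ : R} (hmg : IsCoprime m g) (hmb : IsCoprime m b₂)
    (hb : m ∣ g * b₁ ^ 2 + h * b₂ ^ 2) (hx : m ∣ g * x₁ ^ 2 + h * x₂ ^ 2)
    (hy : m ∣ g * y₁ ^ 2 + h * y₂ ^ 2)
    (hgcd : gcd m (x₁ * b₂ - x₂ * b₁) = gcd m (y₁ * b₂ - y₂ * b₁)) :
    m ∣ 2 * (g * (x₁ * y₁) + h * (x₂ * y₂)) := by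
  -- `m` divides `(z₁b₂ - z₂b₁)(z₁b₂ + z₂b₁)`, and the gcd with the first factor fixes how `m`
  -- splits between the two.
  have dvd_gcd_mul (z₁ z₂ : R) (hz : m ∣ g * z₁ ^ 2 + h * z₂ ^ 2) :
      m ∣ gcd m (z₁ * b₂ - z₂ * b₁) * (z₁ * b₂ + z₂ * b₁) := by
    refine dvd_gcd_mul_of_dvd_mul (hmg.dvd_of_dvd_mul_left ?_)
    convert dvd_sub (hz.mul_left (b₂ ^ 2)) (hb.mul_left (z₂ ^ 2)) using 1
    ring
  have hxy : m ∣ (x₁ * b₂ - x₂ * b₁) * (y₁ * b₂ + y₂ * b₁) :=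
    (hgcd ▸ dvd_gcd_mul y₁ y₂ hy).trans (mul_dvd_mul_right (gcd_dvd_right _ _) _)
  have hyx : m ∣ (y₁ * b₂ - y₂ * b₁) * (x₁ * b₂ + x₂ * b₁) :=
    (hgcd ▸ dvd_gcd_mul x₁ x₂ hx).trans (mul_dvd_mul_right (gcd_dvd_right _ _) _)
  refine (hmb.pow_right (n := 2)).dvd_of_dvd_mul_left ?_
  convert dvd_add ((dvd_add hxy hyx).mul_left g) (hb.mul_left (2 * (x₂ * y₂))) using 1
  ring

theorem mul_eq_mul_of_isotropic_of_orthogonal {R : Type*} [CommRing R] [IsDomain R]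
    [NeZero (2 : R)] {c x y : Fin 3 → R} (hc : ∀ i, c i ≠ 0) (hx : ∑ i, c i * x i ^ 2 = 0)
    (hy : ∑ i, c i * y i ^ 2 = 0) (hxy : ∑ i, c i * (x i * y i) = 0) (i : Fin 3) :
    x i * y (i + 1) = x (i + 1) * y i := by
  rw [sum_fin_three_rotate _ i] at hx hy hxy
  have h : 2 * (c i * c (i + 1)) * (x i * y (i + 1) - x (i + 1) * y i) ^ 2 = 0 := by
    linear_combination
      (c i * x i ^ 2 + c (i + 1) * x (i + 1) ^ 2 - c (i + 2) * x (i + 2) ^ 2) * hy +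
      (c i * y i ^ 2 + c (i + 1) * y (i + 1) ^ 2 - c (i + 2) * y (i + 2) ^ 2) * hx -
      2 * (c i * (x i * y i) + c (i + 1) * (x (i + 1) * y (i + 1)) -
        c (i + 2) * (x (i + 2) * y (i + 2))) * hxy
  have h2 : 2 * (c i * c (i + 1)) ≠ 0 := mul_ne_zero two_ne_zero (mul_ne_zero (hc _) (hc _))
  exact sub_eq_zero.mp (eq_zero_of_pow_eq_zero ((mul_eq_zero.mp h).resolve_left h2))

theorem eq_of_isCoprime_of_mul_eq_mul {x₁ x₂ y₁ y₂ : ℤ} (hx₁ : 0 ≤ x₁) (hy₁ : 0 ≤ y₁)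
    (hx : IsCoprime x₁ x₂) (hy : IsCoprime y₁ y₂) (h : x₁ * y₂ = x₂ * y₁) : x₁ = y₁ :=
  Int.dvd_antisymm hx₁ hy₁ (hx.dvd_of_dvd_mul_left ⟨y₂, h.symm⟩)
    (hy.dvd_of_dvd_mul_left ⟨x₂, by rw [mul_comm y₂, h, mul_comm]⟩)

theorem abs_mul_sq_le_of_isotropic {c x y : Fin 3 → ℝ} {i : Fin 3} (hci : c (i + 1) ≠ 0)
    (hc : |c i| ≤ |c (i + 1)|) (hx : ∀ j, x j ∈ Set.Ioc (1 / 2) 1)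
    (hy : ∀ j, y j ∈ Set.Ioc (1 / 2) 1) (hcx : ∑ j, c j * x j ^ 2 = 0)
    (hcy : ∑ j, c j * y j ^ 2 = 0) :
    |c (i + 1)| * (x (i + 1) * y (i + 2) - y (i + 1) * x (i + 2)) ^ 2 ≤
      16 * |c i| * (x i * y (i + 2) - y i * x (i + 2)) ^ 2 := by
  rw [sum_fin_three_rotate _ i] at hcx hcy
  set p := x i * y (i + 2) - y i * x (i + 2)
  set q := x (i + 1) * y (i + 2) - y (i + 1) * x (i + 2)
  have pos_x (j : Fin 3) : 0 < x j := by linarith [(hx j).1]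
  have pos_y (j : Fin 3) : 0 < y j := by linarith [(hy j).1]
  have sum_ge : 1 / 2 ≤ x (i + 1) * y (i + 2) + y (i + 1) * x (i + 2) := by
    nlinarith [(hx (i + 1)).1, (hx (i + 2)).1, (hy (i + 1)).1, (hy (i + 2)).1]
  have sum_le : x i * y (i + 2) + y i * x (i + 2) ≤ 2 := by
    linarith [mul_le_one₀ (hx i).2 (pos_y _).le (hy (i + 2)).2,
      mul_le_one₀ (hy i).2 (pos_x _).le (hx (i + 2)).2]
  have eliminate : c (i + 1) * q * (x (i + 1) * y (i + 2) + y (i + 1) * x (i + 2)) =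
      -(c i * p * (x i * y (i + 2) + y i * x (i + 2))) := by
    linear_combination y (i + 2) ^ 2 * hcx - x (i + 2) ^ 2 * hcy
  have linear_bound : |c (i + 1)| * |q| ≤ 4 * (|c i| * |p|) := by
    have h := congrArg abs eliminate
    rw [abs_neg, abs_mul, abs_mul, abs_mul, abs_mul, abs_of_pos (a := x _ * _ + _) (by linarith),
      abs_of_pos (a := x i * _ + _)
        (add_pos (mul_pos (pos_x _) (pos_y _)) (mul_pos (pos_y _) (pos_x _)))] at h
    nlinarith [mul_nonneg (abs_nonneg (c (i + 1))) (abs_nonneg q),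
      mul_nonneg (abs_nonneg (c i)) (abs_nonneg p)]
  refine le_of_mul_le_mul_left ?_ (abs_pos.mpr hci)
  calc |c (i + 1)| * (|c (i + 1)| * q ^ 2) = (|c (i + 1)| * |q|) ^ 2 := by
        rw [mul_pow, sq_abs q]; ring
    _ ≤ (4 * (|c i| * |p|)) ^ 2 := by gcongr
    _ = |c i| * (16 * |c i| * p ^ 2) := by rw [← sq_abs p]; ring
    _ ≤ |c (i + 1)| * (16 * |c i| * p ^ 2) := by gcongr

theorem abs_two_mul_pairing_le {c x y : Fin 3 → ℝ} {i : Fin 3} (hci : c (i + 1) ≠ 0)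
    (hc : |c i| ≤ |c (i + 1)|) (hx : ∀ j, x j ∈ Set.Ioc (1 / 2) 1)
    (hy : ∀ j, y j ∈ Set.Ioc (1 / 2) 1) (hcx : ∑ j, c j * x j ^ 2 = 0)
    (hcy : ∑ j, c j * y j ^ 2 = 0) :
    |2 * ∑ j, c j * (x j * y j)| ≤
      17 * |c i| * (x i / x (i + 2) - y i / y (i + 2)) ^ 2 := by
  have hq := abs_mul_sq_le_of_isotropic hci hc hx hy hcx hcy
  rw [sum_fin_three_rotate _ i] at hcx hcy ⊢
  set S := 2 * (c i * (x i * y i) + c (i + 1) * (x (i + 1) * y (i + 1)) +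
    c (i + 2) * (x (i + 2) * y (i + 2)))
  set p := x i * y (i + 2) - y i * x (i + 2) with hp
  set q := x (i + 1) * y (i + 2) - y (i + 1) * x (i + 2)
  set t := x (i + 2) * y (i + 2) with ht
  have hxk : 0 < x (i + 2) := by linarith [(hx (i + 2)).1]
  have hyk : 0 < y (i + 2) := by linarith [(hy (i + 2)).1]
  have ht0 : 0 < t := mul_pos hxk hyk
  have ht1 : t ≤ 1 := mul_le_one₀ (hx (i + 2)).2 hyk.le (hy (i + 2)).2
  have form_of_difference : S * t = -(c i * p ^ 2 + c (i + 1) * q ^ 2) := by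
    linear_combination y (i + 2) ^ 2 * hcx + x (i + 2) ^ 2 * hcy
  have hpt : p = t * (x i / x (i + 2) - y i / y (i + 2)) := by
    rw [hp, ht]
    field_simp
  refine le_of_mul_le_mul_right ?_ ht0
  calc |S| * t = |-(c i * p ^ 2 + c (i + 1) * q ^ 2)| := by
        rw [← form_of_difference, abs_mul S t, abs_of_pos ht0]
    _ ≤ |c i| * p ^ 2 + |c (i + 1)| * q ^ 2 := by
        rw [abs_neg]
        refine (abs_add_le _ _).trans_eq ?_
        rw [abs_mul, abs_mul, abs_sq, abs_sq]
    _ ≤ 17 * |c i| * p ^ 2 := by linarith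
    _ = 17 * |c i| * (x i / x (i + 2) - y i / y (i + 2)) ^ 2 * t * t := by rw [hpt]; ring
    _ ≤ 17 * |c i| * (x i / x (i + 2) - y i / y (i + 2)) ^ 2 * t :=
      mul_le_of_le_one_right (by positivity) ht1

/-- Integral points of the conic `∑ cᵢxᵢ² = 0` in the dyadic box `(Xᵢ/2, Xᵢ]`, with the three terms
of the equation coprime in pairs. The last condition also forces the coefficients to be coprime in
pairs and the coordinates to be coprime in pairs. -/
structure IsDyadicConicPoint (c : Fin 3 → ℤ) (X : Fin 3 → ℝ) (x : Fin 3 → ℤ) : Prop where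
  half_lt (i : Fin 3) : X i / 2 < x i
  le (i : Fin 3) : x i ≤ X i
  sum_eq_zero : ∑ i, c i * x i ^ 2 = 0
  coprime : Pairwise fun i j ↦ IsCoprime (c i * x i ^ 2) (c j * x j ^ 2)

/-- Modulo a prime power `q` exactly dividing `cᵢ` (say with `q` odd), the conic through `b` and `x`
becomes the pair of lines `xᵢ₊₁ / xᵢ₊₂ = ±bᵢ₊₁ / bᵢ₊₂`; this gcd records which one contains `x`.
Indices are taken in `Fin 3`, that is, modulo `3`. -/
def residueKey (c b x : Fin 3 → ℤ) (i : Fin 3) : ℕ :=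
  Int.gcd (c i) (x (i + 1) * b (i + 2) - x (i + 2) * b (i + 1))

/-- Index of the interval of length `1 / M` that contains the normalised affine coordinate
`(xᵢ / Xᵢ) / (xᵢ₊₂ / Xᵢ₊₂)`, which cuts the real conic into `O(M)` arcs. -/
noncomputable def arcKey (M : ℝ) (X : Fin 3 → ℝ) (i : Fin 3) (x : Fin 3 → ℤ) : ℤ :=
  ⌊M * (x i / X i / (x (i + 2) / X (i + 2)))⌋

theorem residueKey_mem_divisors {c : Fin 3 → ℤ} (hc : ∀ i, c i ≠ 0) (b x : Fin 3 → ℤ)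
    (i : Fin 3) : residueKey c b x i ∈ (c i).natAbs.divisors :=
  Nat.mem_divisors.mpr ⟨Nat.gcd_dvd_left _ _, Int.natAbs_ne_zero.mpr (hc i)⟩

namespace IsDyadicConicPoint

variable {c : Fin 3 → ℤ} {X : Fin 3 → ℝ} {b x y : Fin 3 → ℤ} {i j : Fin 3} {M : ℝ}

theorem coprime_coeff (hx : IsDyadicConicPoint c X x) (hij : i ≠ j) : IsCoprime (c i) (c j) :=
  (hx.coprime hij).of_mul_left_left.of_mul_right_left

theorem coprime_coeff_coord (hx : IsDyadicConicPoint c X x) (hij : i ≠ j) :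
    IsCoprime (c i) (x j) :=
  (IsCoprime.pow_right_iff two_pos).mp (hx.coprime hij).of_mul_left_left.of_mul_right_right

theorem coprime_coord (hx : IsDyadicConicPoint c X x) (hij : i ≠ j) : IsCoprime (x i) (x j) :=
  (IsCoprime.pow_iff two_pos two_pos).mp (hx.coprime hij).of_mul_left_right.of_mul_right_right

theorem pos (hx : IsDyadicConicPoint c X x) (hX : 0 < X i) : 0 < x i := by
  have := hx.half_lt i
  exact_mod_cast (by linarith : (0 : ℝ) < x i)

theorem div_mem_Ioc (hx : IsDyadicConicPoint c X x) (hX : 0 < X i) :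
    x i / X i ∈ Set.Ioc (1 / 2 : ℝ) 1 :=
  ⟨by rw [lt_div_iff₀ hX]; linarith [hx.half_lt i], (div_le_one₀ hX).mpr (hx.le i)⟩

theorem dvd_sum_other (hx : IsDyadicConicPoint c X x) (i : Fin 3) :
    c i ∣ c (i + 1) * x (i + 1) ^ 2 + c (i + 2) * x (i + 2) ^ 2 := by
  have h := hx.sum_eq_zero
  rw [sum_fin_three_rotate _ i] at h
  exact ⟨-x i ^ 2, by linear_combination h⟩

theorem prod_dvd_two_mul_pairing (hb : IsDyadicConicPoint c X b) (hx : IsDyadicConicPoint c X x)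
    (hy : IsDyadicConicPoint c X y) (hkey : residueKey c b x = residueKey c b y) :
    ∏ i, c i ∣ 2 * ∑ i, c i * (x i * y i) := by
  refine Finset.prod_dvd_of_coprime (fun i _ j _ hij ↦ hx.coprime_coeff hij) fun i _ ↦ ?_
  have h : c i ∣ 2 * (c (i + 1) * (x (i + 1) * y (i + 1)) + c (i + 2) * (x (i + 2) * y (i + 2))) :=
    dvd_two_mul_pairing_of_gcd_eq (hb.coprime_coeff (by simp)) (hb.coprime_coeff_coord (by simp))
      (hb.dvd_sum_other i) (hx.dvd_sum_other i) (hy.dvd_sum_other i)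
      (by rw [← Int.coe_gcd, ← Int.coe_gcd]; exact congrArg Nat.cast (congrFun hkey i))
  rw [sum_fin_three_rotate _ i]
  convert dvd_add h (dvd_mul_right (c i) (2 * (x i * y i))) using 1
  ring

theorem eq_of_pairing_eq_zero (hc : ∀ i, c i ≠ 0) (hX : ∀ i, 0 < X i)
    (hx : IsDyadicConicPoint c X x) (hy : IsDyadicConicPoint c X y)
    (hxy : ∑ i, c i * (x i * y i) = 0) : x = y := by
  funext i
  exact eq_of_isCoprime_of_mul_eq_mul (hx.pos (hX i)).le (hy.pos (hX i)).le
    (hx.coprime_coord (by simp)) (hy.coprime_coord (by simp))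
    (mul_eq_mul_of_isotropic_of_orthogonal hc hx.sum_eq_zero hy.sum_eq_zero hxy i)

theorem abs_two_mul_pairing_lt (hc : ∀ i, c i ≠ 0) (hX : ∀ i, 0 < X i) (hM : 0 < M)
    (hi : |(c i : ℝ)| * X i ^ 2 ≤ |(c (i + 1) : ℝ)| * X (i + 1) ^ 2)
    (hx : IsDyadicConicPoint c X x) (hy : IsDyadicConicPoint c X y)
    (hkey : arcKey M X i x = arcKey M X i y) :
    M ^ 2 * |2 * ∑ j, (c j : ℝ) * (x j * y j)| < 17 * (|(c i : ℝ)| * X i ^ 2) := by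
  have hc' (j : Fin 3) : (c j : ℝ) ≠ 0 := by exact_mod_cast hc j
  have hX' (j : Fin 3) : X j ≠ 0 := (hX j).ne'
  have scaled_form (u v : Fin 3 → ℤ) (j : Fin 3) :
      c j * X j ^ 2 * (u j / X j * (v j / X j)) = c j * (u j * v j) := by
    have := hX' j
    field_simp
  have scaled_conic {u : Fin 3 → ℤ} (hu : IsDyadicConicPoint c X u) :
      ∑ j, c j * X j ^ 2 * (u j / X j) ^ 2 = 0 := by
    have h (j : Fin 3) := scaled_form u u j
    simp only [← sq] at h
    simp only [h]
    exact_mod_cast hu.sum_eq_zero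
  have h := abs_two_mul_pairing_le (c := fun j ↦ c j * X j ^ 2) (x := fun j ↦ x j / X j)
    (y := fun j ↦ y j / X j) (i := i) (mul_ne_zero (hc' _) (pow_ne_zero 2 (hX' _)))
    (by simpa only [abs_mul, abs_sq] using hi) (fun j ↦ hx.div_mem_Ioc (hX j))
    (fun j ↦ hy.div_mem_Ioc (hX j)) (scaled_conic hx) (scaled_conic hy)
  simp only [scaled_form, abs_mul (c i : ℝ), abs_sq] at h
  set Δ := (x i / X i / (x (i + 2) / X (i + 2)) - y i / X i / (y (i + 2) / X (i + 2)) : ℝ)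
  have arc_close : (M * Δ) ^ 2 < 1 := by
    rw [sq_lt_one_iff_abs_lt_one, mul_sub]
    exact Int.abs_sub_lt_one_of_floor_eq_floor hkey
  have hci : 0 < |(c i : ℝ)| * X i ^ 2 := mul_pos (abs_pos.mpr (hc' i)) (pow_pos (hX i) 2)
  calc M ^ 2 * |2 * ∑ j, (c j : ℝ) * (x j * y j)|
      ≤ M ^ 2 * (17 * (|(c i : ℝ)| * X i ^ 2) * Δ ^ 2) := by gcongr
    _ = 17 * (|(c i : ℝ)| * X i ^ 2) * (M * Δ) ^ 2 := by ring
    _ < 17 * (|(c i : ℝ)| * X i ^ 2) := mul_lt_of_lt_one_right (by positivity) arc_close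

theorem eq_of_keys_eq (hc : ∀ i, c i ≠ 0) (hX : ∀ i, 0 < X i) (hM : 0 < M)
    (hi : |(c i : ℝ)| * X i ^ 2 ≤ |(c (i + 1) : ℝ)| * X (i + 1) ^ 2)
    (hMc : 17 * (|(c i : ℝ)| * X i ^ 2) ≤ M ^ 2 * ∏ j, |(c j : ℝ)|)
    (hb : IsDyadicConicPoint c X b) (hx : IsDyadicConicPoint c X x)
    (hy : IsDyadicConicPoint c X y) (hres : residueKey c b x = residueKey c b y)
    (harc : arcKey M X i x = arcKey M X i y) : x = y := by
  have h_lt : |2 * ∑ j, c j * (x j * y j)| < |∏ j, c j| := by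
    have h := (abs_two_mul_pairing_lt hc hX hM hi hx hy harc).trans_le hMc
    rw [← Finset.abs_prod] at h
    exact_mod_cast lt_of_mul_lt_mul_left h (sq_nonneg M)
  have h_zero := Int.eq_zero_of_abs_lt_dvd
    ((abs_dvd _ _).mpr (prod_dvd_two_mul_pairing hb hx hy hres)) h_lt
  exact eq_of_pairing_eq_zero hc hX hx hy ((mul_eq_zero.mp h_zero).resolve_left two_ne_zero)

theorem arcKey_mem_Icc (hX : ∀ i, 0 < X i) (hM : 0 < M) (hx : IsDyadicConicPoint c X x)
    (i : Fin 3) : arcKey M X i x ∈ Finset.Icc 0 ⌊2 * M⌋ := by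
  obtain ⟨hi_gt, hi_le⟩ := hx.div_mem_Ioc (hX i)
  obtain ⟨hk_gt, -⟩ := hx.div_mem_Ioc (hX (i + 2))
  have hk_pos := one_half_pos.trans hk_gt
  have hratio : (x i / X i / (x (i + 2) / X (i + 2)) : ℝ) ≤ 2 := by
    rw [div_le_iff₀ hk_pos]
    linarith
  have hratio_nonneg := div_nonneg (one_half_pos.trans hi_gt).le hk_pos.le
  rw [Finset.mem_Icc, arcKey, mul_comm 2]
  exact ⟨Int.floor_nonneg.mpr (mul_nonneg hM.le hratio_nonneg), Int.floor_le_floor (by gcongr)⟩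

theorem card_le_of_arcs (hc : ∀ i, c i ≠ 0) (hX : ∀ i, 0 < X i) (hM : 0 < M)
    (hi : |(c i : ℝ)| * X i ^ 2 ≤ |(c (i + 1) : ℝ)| * X (i + 1) ^ 2)
    (hMc : 17 * (|(c i : ℝ)| * X i ^ 2) ≤ M ^ 2 * ∏ j, |(c j : ℝ)|)
    {s : Finset (Fin 3 → ℤ)} (hs : ∀ x ∈ s, IsDyadicConicPoint c X x) :
    (s.card : ℝ) ≤ (∏ j, ((c j).natAbs.divisors.card : ℝ)) * (2 * M + 1) := by
  obtain rfl | ⟨b, hb⟩ := s.eq_empty_or_nonempty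
  · simp only [Finset.card_empty, Nat.cast_zero]
    positivity
  have hcard := Finset.card_le_card_of_injOn (fun x ↦ (residueKey c b x, arcKey M X i x))
    (t := (Fintype.piFinset fun j ↦ (c j).natAbs.divisors) ×ˢ Finset.Icc 0 ⌊2 * M⌋)
    (fun x hx ↦ Finset.mem_product.mpr ⟨Fintype.mem_piFinset.mpr (residueKey_mem_divisors hc b x),
      arcKey_mem_Icc hX hM (hs x hx) i⟩)
    (fun x hx y hy hxy ↦ eq_of_keys_eq hc hX hM hi hMc (hs b hb) (hs x hx) (hs y hy)
      (Prod.ext_iff.mp hxy).1 (Prod.ext_iff.mp hxy).2)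
  have harcs : ((Finset.Icc 0 ⌊2 * M⌋).card : ℝ) ≤ 2 * M + 1 := by
    have hfloor : 0 ≤ ⌊2 * M⌋ := Int.floor_nonneg.mpr (by positivity)
    have hcard_Icc := Int.card_Icc_of_le 0 ⌊2 * M⌋ (by omega)
    rw [sub_zero] at hcard_Icc
    calc ((Finset.Icc 0 ⌊2 * M⌋).card : ℝ) = ⌊2 * M⌋ + 1 := by exact_mod_cast hcard_Icc
      _ ≤ 2 * M + 1 := by gcongr; exact Int.floor_le _
  calc (s.card : ℝ) ≤ (∏ j, ((c j).natAbs.divisors.card : ℝ)) * (Finset.Icc 0 ⌊2 * M⌋).card := by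
        rw [Finset.card_product, Fintype.card_piFinset] at hcard
        exact_mod_cast hcard
    _ ≤ (∏ j, ((c j).natAbs.divisors.card : ℝ)) * (2 * M + 1) := by gcongr

theorem card_le (hc : ∀ i, c i ≠ 0) (hX : ∀ i, 0 < X i) {s : Finset (Fin 3 → ℤ)}
    (hs : ∀ x ∈ s, IsDyadicConicPoint c X x) :
    (s.card : ℝ) ≤ (∏ i, ((c i).natAbs.divisors.card : ℝ)) *
      (10 * ((∏ i, X i) / ∏ i, |(c i : ℝ)|) ^ (1 / 3 : ℝ) + 1) := by
  have hc' (i : Fin 3) : 0 < |(c i : ℝ)| := abs_pos.mpr (by exact_mod_cast hc i)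
  have hcprod : 0 < ∏ i, |(c i : ℝ)| := Finset.prod_pos fun i _ ↦ hc' i
  have hXprod : 0 < ∏ i, X i := Finset.prod_pos fun i _ ↦ hX i
  set R := ((∏ i, X i) / ∏ i, |(c i : ℝ)|) ^ (1 / 3 : ℝ) with hR
  have hR3 : R ^ 3 * ∏ i, |(c i : ℝ)| = ∏ i, X i := by
    rw [hR, ← Real.rpow_mul_natCast (by positivity)]
    norm_num [hcprod.ne']
  obtain ⟨i, hi⟩ := Finite.exists_min fun i ↦ |(c i : ℝ)| * X i ^ 2
  have min_le : |(c i : ℝ)| * X i ^ 2 ≤ R ^ 2 * ∏ j, |(c j : ℝ)| := by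
    refine le_of_pow_le_pow_left₀ three_ne_zero (by positivity) ?_
    calc (|(c i : ℝ)| * X i ^ 2) ^ 3 = ∏ _j : Fin 3, |(c i : ℝ)| * X i ^ 2 := by simp
      _ ≤ ∏ j, |(c j : ℝ)| * X j ^ 2 := Finset.prod_le_prod (fun _ _ ↦ by positivity) fun j _ ↦ hi j
      _ = (R ^ 2 * ∏ j, |(c j : ℝ)|) ^ 3 := by
        rw [Finset.prod_mul_distrib, Finset.prod_pow, ← hR3]
        ring
  have h := card_le_of_arcs hc hX (M := 5 * R) (by positivity) (hi (i + 1))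
    (by nlinarith [sq_nonneg R]) hs
  rwa [← mul_assoc, show (2 : ℝ) * 5 = 10 by norm_num] at h

end IsDyadicConicPoint

/-- The sextuples counted by `S0` without its squarefreeness conditions: `y` runs over a dyadic box
and `x` over the points, in another dyadic box, of the conic with coefficients `aᵢyᵢ³`. Positivity
is implied by the boxes, and the gcd conditions become coprimality of the terms of the equation. -/
def coprimeSolutions (a : Fin 3 → ℤ) (X Y : Fin 3 → ℝ) : Set ((Fin 3 → ℤ) × (Fin 3 → ℤ)) :=
  {p | IsDyadicConicPoint (fun i ↦ a i * p.2 i ^ 3) X p.1 ∧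
    ∀ i, Y i / 2 < p.2 i ∧ (p.2 i : ℝ) ≤ Y i}

section coprimeSolutions

variable {a : Fin 3 → ℤ} {X Y : Fin 3 → ℝ} {B T : ℝ}

theorem snd_pos_of_mem_coprimeSolutions {p : (Fin 3 → ℤ) × (Fin 3 → ℤ)}
    (hp : p ∈ coprimeSolutions a X Y) {i : Fin 3} (hY : 0 < Y i) : 0 < p.2 i := by
  exact_mod_cast (half_pos hY).trans (hp.2 i).1

theorem coprimeSolutions_subset (hX : ∀ i, 0 < X i) (hY : ∀ i, 0 < Y i) :
    coprimeSolutions a X Y ⊆ (Fintype.piFinset fun i ↦ Finset.Icc 1 ⌊X i⌋) ×ˢ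
      (Fintype.piFinset fun i ↦ Finset.Icc 1 ⌊Y i⌋ : Finset (Fin 3 → ℤ)) := by
  intro p hp
  simp only [Set.mem_prod, Finset.mem_coe, Fintype.mem_piFinset, Finset.mem_Icc, Int.le_floor]
  exact ⟨fun i ↦ ⟨hp.1.pos (hX i), hp.1.le i⟩,
    fun i ↦ ⟨snd_pos_of_mem_coprimeSolutions hp (hY i), (hp.2 i).2⟩⟩

theorem coprimeSolutions_finite (hX : ∀ i, 0 < X i) (hY : ∀ i, 0 < Y i) :
    (coprimeSolutions a X Y).Finite :=
  ((Finset.finite_toSet _).prod (Finset.finite_toSet _)).subset (coprimeSolutions_subset hX hY)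

theorem div_eight_pow_le_prod_abs_coeff (ha : ∀ i, a i ≠ 0) (hY : ∀ i, 0 < Y i) {y : Fin 3 → ℤ}
    (hy : ∀ i, Y i / 2 < y i) :
    ((∏ i, Y i) / 8) ^ 3 ≤ ∏ i, |((a i * y i ^ 3 : ℤ) : ℝ)| := by
  have y_pos (i : Fin 3) : 0 < y i := by exact_mod_cast (half_pos (hY i)).trans (hy i)
  have coeff_ge (i : Fin 3) : (Y i / 2) ^ 3 ≤ |((a i * y i ^ 3 : ℤ) : ℝ)| := by
    have ha_one : (1 : ℝ) ≤ |(a i : ℝ)| := by exact_mod_cast Int.one_le_abs (ha i)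
    push_cast
    rw [abs_mul, abs_of_pos (a := (y i : ℝ) ^ 3) (pow_pos (by exact_mod_cast y_pos i) 3)]
    have := hY i
    refine (le_mul_of_one_le_left (by positivity) ha_one).trans ?_
    gcongr
    exact (hy i).le
  calc ((∏ i, Y i) / 8) ^ 3 = ∏ i, (Y i / 2) ^ 3 := by
        simp only [Fin.prod_univ_three]; ring
    _ ≤ _ := Finset.prod_le_prod (fun i _ ↦ by have := hY i; positivity) fun i _ ↦ coeff_ge i

theorem card_conicPoints_le_of_card_divisors_le (ha : ∀ i, a i ≠ 0) (hX : ∀ i, 0 < X i)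
    (hY : ∀ i, 0 < Y i) {y : Fin 3 → ℤ} (hy : ∀ i, Y i / 2 < y i)
    (hT : ∀ i, ((a i * y i ^ 3).natAbs.divisors.card : ℝ) ≤ T)
    {s : Finset (Fin 3 → ℤ)} (hs : ∀ x ∈ s, IsDyadicConicPoint (fun i ↦ a i * y i ^ 3) X x) :
    (s.card : ℝ) ≤ T ^ 3 * (80 * (∏ i, X i) ^ (1 / 3 : ℝ) / (∏ i, Y i) + 1) := by
  have hX_prod : 0 < ∏ i, X i := Finset.prod_pos fun i _ ↦ hX i
  have hY_prod : 0 < ∏ i, Y i := Finset.prod_pos fun i _ ↦ hY i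
  have y_pos (i : Fin 3) : 0 < y i := by exact_mod_cast (half_pos (hY i)).trans (hy i)
  have coeff_prod_ge := div_eight_pow_le_prod_abs_coeff ha hY hy
  have root_le : ((∏ i, X i) / ∏ i, |((a i * y i ^ 3 : ℤ) : ℝ)|) ^ (1 / 3 : ℝ) ≤
      8 * (∏ i, X i) ^ (1 / 3 : ℝ) / ∏ i, Y i :=
    calc ((∏ i, X i) / ∏ i, |((a i * y i ^ 3 : ℤ) : ℝ)|) ^ (1 / 3 : ℝ)
        ≤ ((∏ i, X i) / ((∏ i, Y i) / 8) ^ 3) ^ (1 / 3 : ℝ) := by gcongr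
      _ = (∏ i, X i) ^ (1 / 3 : ℝ) / ((∏ i, Y i) / 8) := by
        rw [Real.div_rpow hX_prod.le (by positivity), one_div (3 : ℝ)]
        congr 1
        exact Real.pow_rpow_inv_natCast (by positivity) three_ne_zero
      _ = 8 * (∏ i, X i) ^ (1 / 3 : ℝ) / ∏ i, Y i := by field_simp
  calc (s.card : ℝ) ≤ (∏ i, ((a i * y i ^ 3).natAbs.divisors.card : ℝ)) *
        (10 * ((∏ i, X i) / ∏ i, |((a i * y i ^ 3 : ℤ) : ℝ)|) ^ (1 / 3 : ℝ) + 1) :=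
        IsDyadicConicPoint.card_le (fun i ↦ mul_ne_zero (ha i) (pow_ne_zero 3 (y_pos i).ne')) hX hs
    _ ≤ (∏ _i : Fin 3, T) * (10 * (8 * (∏ i, X i) ^ (1 / 3 : ℝ) / ∏ i, Y i) + 1) := by
        have hT₀ : 0 ≤ T := (Nat.cast_nonneg _).trans (hT 0)
        gcongr
        exact hT _
    _ = T ^ 3 * (80 * (∏ i, X i) ^ (1 / 3 : ℝ) / (∏ i, Y i) + 1) := by
        rw [Finset.prod_const, Finset.card_fin]; ring

theorem ncard_coprimeSolutions_le_of_card_divisors_le (ha : ∀ i, a i ≠ 0)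
    (hX : ∀ i, 0 < X i) (hY : ∀ i, 0 < Y i) (hT₀ : 0 ≤ T) (hT : ∀ p ∈ coprimeSolutions a X Y, ∀ i,
      ((a i * p.2 i ^ 3).natAbs.divisors.card : ℝ) ≤ T) :
    ((coprimeSolutions a X Y).ncard : ℝ) ≤
      T ^ 3 * (∏ i, Y i + 80 * (∏ i, X i) ^ (1 / 3 : ℝ)) := by
  classical
  have hfin := coprimeSolutions_finite (a := a) hX hY
  have hY_prod : 0 < ∏ i, Y i := Finset.prod_pos fun i _ ↦ hY i
  have hX_prod : 0 < ∏ i, X i := Finset.prod_pos fun i _ ↦ hX i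
  set s := hfin.toFinset
  have mem_s {p} (hp : p ∈ s) : p ∈ coprimeSolutions a X Y := hfin.mem_toFinset.mp hp
  set K := T ^ 3 * (80 * (∏ i, X i) ^ (1 / 3 : ℝ) / (∏ i, Y i) + 1) with hK
  have fiber_le (y) (hy : y ∈ s.image Prod.snd) : ((s.filter (·.2 = y)).card : ℝ) ≤ K := by
    obtain ⟨q, hq, rfl⟩ := Finset.mem_image.mp hy
    have fst_injOn : Set.InjOn Prod.fst {p : (Fin 3 → ℤ) × (Fin 3 → ℤ) | p.2 = q.2} :=
      fun p hp r hr h ↦ Prod.ext h (Eq.trans hp (Eq.symm hr))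
    rw [← Finset.card_image_of_injOn (s := s.filter (·.2 = q.2))
      (fst_injOn.mono fun p hp ↦ (Finset.mem_filter.mp hp).2)]
    refine card_conicPoints_le_of_card_divisors_le ha hX hY
      (fun i ↦ ((mem_s hq).2 i).1) (hT q (mem_s hq)) fun x hx ↦ ?_
    obtain ⟨p, hp, rfl⟩ := Finset.mem_image.mp hx
    obtain ⟨hps, hpq⟩ := Finset.mem_filter.mp hp
    exact hpq ▸ (mem_s hps).1
  have card_image_le : ((s.image Prod.snd).card : ℝ) ≤ ∏ i, Y i := by
    refine le_trans ?_ (card_piFinset_Icc_floor_le fun i ↦ (hY i).le)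
    refine Nat.cast_le.mpr (Finset.card_le_card (Finset.image_subset_iff.mpr fun p hp ↦ ?_))
    exact (coprimeSolutions_subset hX hY (mem_s hp)).2
  calc ((coprimeSolutions a X Y).ncard : ℝ)
      = ∑ y ∈ s.image Prod.snd, ((s.filter (·.2 = y)).card : ℝ) := by
        rw [Set.ncard_eq_toFinset_card _ hfin, Finset.card_eq_sum_card_image Prod.snd,
          Nat.cast_sum]
    _ ≤ (s.image Prod.snd).card * K := by
        simpa only [nsmul_eq_mul] using Finset.sum_le_card_nsmul _ _ _ fiber_le
    _ ≤ (∏ i, Y i) * K := by gcongr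
    _ = T ^ 3 * (∏ i, Y i + 80 * (∏ i, X i) ^ (1 / 3 : ℝ)) := by rw [hK]; field_simp; ring

theorem natAbs_coeff_ne_zero_of_mem_coprimeSolutions (ha : ∀ i, a i ≠ 0) (hY : ∀ i, 0 < Y i)
    {p : (Fin 3 → ℤ) × (Fin 3 → ℤ)} (hp : p ∈ coprimeSolutions a X Y) (i : Fin 3) :
    (a i * p.2 i ^ 3).natAbs ≠ 0 :=
  Int.natAbs_ne_zero.mpr
    (mul_ne_zero (ha i) (pow_ne_zero 3 (snd_pos_of_mem_coprimeSolutions hp (hY i)).ne'))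

theorem natAbs_coeff_le_of_mem_coprimeSolutions (ha : ∀ i, a i ≠ 0) (hX : ∀ i, 1 ≤ X i)
    (hY : ∀ i, 1 ≤ Y i) (hB : ∀ i, X i ^ 2 * Y i ^ 3 ≤ 32 * B / |(a i : ℝ)|)
    {p : (Fin 3 → ℤ) × (Fin 3 → ℤ)} (hp : p ∈ coprimeSolutions a X Y) (i : Fin 3) :
    ((a i * p.2 i ^ 3).natAbs : ℝ) ≤ 32 * B := by
  have hai : 0 < |(a i : ℝ)| := abs_pos.mpr (by exact_mod_cast ha i)
  have y_pos : (0 : ℝ) < p.2 i := by linarith [hY i, (hp.2 i).1]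
  have hY_i := hY i
  calc ((a i * p.2 i ^ 3).natAbs : ℝ) = p.2 i ^ 3 * |(a i : ℝ)| := by
        rw [Nat.cast_natAbs]; push_cast; rw [abs_mul, abs_of_pos (pow_pos y_pos 3), mul_comm]
    _ ≤ Y i ^ 3 * |(a i : ℝ)| := by gcongr; exact (hp.2 i).2
    _ ≤ X i ^ 2 * Y i ^ 3 * |(a i : ℝ)| := by
        gcongr
        exact le_mul_of_one_le_left (by positivity) (one_le_pow₀ (hX i))
    _ ≤ 32 * B := (le_div_iff₀ hai).mp (hB i)

theorem S0_subset_coprimeSolutions (ha : ∀ i, a i ≠ 0) (hcop : IsCoprime (a 0) (a 1)) :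
    S0 a X Y ⊆ coprimeSolutions a X Y := by
  rintro ⟨x, y⟩ ⟨x_pos, y_pos, hx, hy, heq, hgcd_xy, hgcd_a, -⟩
  have hsum : ∑ i, a i * y i ^ 3 * x i ^ 2 = 0 := by
    rw [Fin.sum_univ_three]
    linear_combination heq
  refine ⟨⟨fun i ↦ (hx i).1, fun i ↦ (hx i).2, hsum, ?_⟩, hy⟩
  refine pairwise_isCoprime_terms (fun i ↦ ?_) hsum hcop (fun i j ↦ ?_) fun q hq ↦ ?_
  · exact mul_ne_zero (mul_ne_zero (ha i) (pow_ne_zero 3 (y_pos i).ne'))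
      (pow_ne_zero 2 (x_pos i).ne')
  · have h : IsCoprime (∏ i, a i) (∏ i, x i * y i) := by
      rw [Int.isCoprime_iff_gcd_eq_one, Fin.prod_univ_three, Fin.prod_univ_three, ← hgcd_a]
      congr 1
      ring
    exact IsCoprime.prod_left_iff.mp (IsCoprime.prod_right_iff.mp h j (Finset.mem_univ j)) i
      (Finset.mem_univ i)
  · by_contra! h
    refine hq.not_isUnit (isUnit_of_dvd_one ?_)
    rw [← Nat.cast_one, ← hgcd_xy]
    exact Int.dvd_coe_gcd (h 0) (Int.dvd_coe_gcd (h 1) (h 2))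

theorem ncard_S0_le_ncard_coprimeSolutions (ha : ∀ i, a i ≠ 0) (hcop : IsCoprime (a 0) (a 1))
    (hX : ∀ i, 0 < X i) (hY : ∀ i, 0 < Y i) :
    (S0 a X Y).ncard ≤ (coprimeSolutions a X Y).ncard :=
  Set.ncard_le_ncard (S0_subset_coprimeSolutions ha hcop) (coprimeSolutions_finite hX hY)

end coprimeSolutions

theorem N0_easy_bound_general (ε : ℝ) (hε : 0 < ε) :
    ∃ C : ℝ, 0 < C ∧ ∀ (a : Fin 3 → ℤ) (X Y : Fin 3 → ℝ) (B : ℝ),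
      (∀ i, a i ≠ 0) → (∀ i, 1 ≤ X i) → (∀ i, 1 ≤ Y i) →
      (∀ i, X i ^ 2 * Y i ^ 3 ≤ 32 * B / |(a i : ℝ)|) →
      ((coprimeSolutions a X Y).ncard : ℝ) ≤
          C * (∏ i, Y i + (∏ i, X i) ^ (1 / 3 : ℝ)) * B ^ ε ∧
        ((coprimeSolutions a X Y).ncard : ℝ) ≤ C * (∏ i, Y i + B ^ (1 / 2 : ℝ)) * B ^ ε := by
  obtain ⟨D, hD, divisors_le⟩ := exists_card_divisors_le_mul_rpow (ε := ε / 3) (by positivity)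
  refine ⟨480 * (D ^ 3 * 32 ^ ε), by positivity, fun a X Y B ha hX hY hXYB ↦ ?_⟩
  have hX₀ (i : Fin 3) : 0 < X i := one_pos.trans_le (hX i)
  have hY₀ (i : Fin 3) : 0 < Y i := one_pos.trans_le (hY i)
  have X_sq_le (i : Fin 3) : X i ^ 2 ≤ 32 * B :=
    sq_le_of_sq_mul_pow_le_div (by exact_mod_cast Int.one_le_abs (ha i)) (hY i) (hXYB i)
  have hB : 0 < B := by nlinarith [X_sq_le 0, hX 0]
  have hP : 0 ≤ ∏ i, Y i := Finset.prod_nonneg fun i _ ↦ (hY₀ i).le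
  have hQ : 0 ≤ (∏ i, X i) ^ (1 / 3 : ℝ) :=
    Real.rpow_nonneg (Finset.prod_nonneg fun i _ ↦ (hX₀ i).le) _
  have hcount := ncard_coprimeSolutions_le_of_card_divisors_le ha hX₀ hY₀
    (T := D * (32 * B) ^ (ε / 3)) (by positivity)
    fun p hp i ↦ (divisors_le _ (natAbs_coeff_ne_zero_of_mem_coprimeSolutions ha hY₀ hp i)).trans
      (by gcongr; exact natAbs_coeff_le_of_mem_coprimeSolutions ha hX hY hXYB hp i)
  have hT : (D * (32 * B) ^ (ε / 3)) ^ 3 = D ^ 3 * 32 ^ ε * B ^ ε := by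
    rw [mul_pow, ← Real.rpow_mul_natCast (by positivity), Nat.cast_ofNat,
      div_mul_cancel₀ _ three_ne_zero, Real.mul_rpow (by positivity) hB.le, mul_assoc]
  have hroot := prod_fin_three_rpow_third_le (fun i ↦ (hX₀ i).le)
    fun i ↦ le_six_mul_rpow_half hB.le (X_sq_le i)
  rw [hT] at hcount
  constructor <;> refine hcount.trans ?_
  · calc D ^ 3 * 32 ^ ε * B ^ ε * (∏ i, Y i + 80 * (∏ i, X i) ^ (1 / 3 : ℝ))
      _ ≤ D ^ 3 * 32 ^ ε * B ^ ε * (480 * (∏ i, Y i + (∏ i, X i) ^ (1 / 3 : ℝ))) := by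
        gcongr
        linarith
      _ = _ := by ring
  · calc D ^ 3 * 32 ^ ε * B ^ ε * (∏ i, Y i + 80 * (∏ i, X i) ^ (1 / 3 : ℝ))
      _ ≤ D ^ 3 * 32 ^ ε * B ^ ε * (480 * (∏ i, Y i + B ^ (1 / 2 : ℝ))) := by
        gcongr
        linarith
      _ = _ := by ring

/-- For every `ε > 0` there is a constant `C(ε)`, uniform in the `aᵢ`, `Xᵢ`, `Yᵢ`, such that
`N₀(B) ≤ C(ε)(Y₁Y₂Y₃ + (X₁X₂X₃)^{1/3})B^ε`; consequently
`N₀(B) ≤ C(ε)(Y₁Y₂Y₃ + B^{1/2})B^ε`. -/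
theorem N0_easy_bound (ε : ℝ) (hε : 0 < ε) :
    ∃ C : ℝ, 0 < C ∧ ∀ (a : Fin 3 → ℤ) (X Y : Fin 3 → ℝ) (B : ℝ),
      2 ≤ B → (∀ i, a i ≠ 0) → (∀ i, Squarefree (a i)) →
      (∀ i j, i ≠ j → IsCoprime (a i) (a j)) →
      (∀ i, 1 ≤ X i) → (∀ i, 1 ≤ Y i) →
      (∀ i, X i ^ 2 * Y i ^ 3 ≤ 32 * B / |(a i : ℝ)|) →
      ((S0 a X Y).ncard : ℝ) ≤
          C * (Y 0 * Y 1 * Y 2 + (X 0 * X 1 * X 2) ^ ((1 : ℝ) / 3)) * B ^ ε ∧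
        ((S0 a X Y).ncard : ℝ) ≤ C * (Y 0 * Y 1 * Y 2 + B ^ ((1 : ℝ) / 2)) * B ^ ε := by
  obtain ⟨C, hC, hbound⟩ := N0_easy_bound_general ε hε
  refine ⟨C, hC, fun a X Y B _ ha _ hcop hX hY hXYB ↦ ?_⟩
  have hS0 : ((S0 a X Y).ncard : ℝ) ≤ (coprimeSolutions a X Y).ncard :=
    Nat.cast_le.mpr (ncard_S0_le_ncard_coprimeSolutions ha (hcop 0 1 (by decide))
      (fun i ↦ one_pos.trans_le (hX i)) fun i ↦ one_pos.trans_le (hY i))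
  simpa only [Fin.prod_univ_three] using (hbound a X Y B ha hX hY hXYB).imp hS0.trans hS0.trans
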